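/- arXiv:2104.12415 — 7 statements merged into one kernel-verified Lean document; each statement's English description precedes it below -/
import Mathlib

section
/- Let (A,S,Z,Φ) be a structured C*-algebra. For all a,b,c,s ∈ S, if a < b and b <_s c, then a <_s c (transitivity of domination). -/
variable {A : Type*} [CStarAlgebra A] [PartialOrder A] [StarOrderedRing A]

/-- A structured C*-algebra `(A, S, Z, Φ)`. -/
structure StructuredCStar (A : Type*) [CStarAlgebra A] [PartialOrder A]
    [StarOrderedRing A] where
  /-- The expectation. -/
  Φ : A →ₗ[ℂ] A
  /-- The distinguished closed *-subsemigroup. -/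
  S : Set A
  /-- The distinguished central C*-subalgebra. -/
  Z : Set A
  Φ_idem : ∀ a : A, Φ (Φ a) = Φ a
  Φ_contractive : ∀ a : A, ‖Φ a‖ ≤ ‖a‖
  Φ_pos : ∀ a : A, 0 ≤ a → 0 ≤ Φ a
  Φ_mul_left : ∀ a b : A, Φ (Φ a * b) = Φ a * Φ b
  Φ_mul_right : ∀ a b : A, Φ (a * Φ b) = Φ a * Φ b
  S_isClosed : IsClosed S
  S_mul : ∀ a ∈ S, ∀ b ∈ S, a * b ∈ S
  S_star : ∀ a ∈ S, star a ∈ S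
  S_smul : ∀ (c : ℂ), ∀ a ∈ S, c • a ∈ S
  Z_sub_S : Z ⊆ S
  Z_isClosed : IsClosed Z
  Z_add : ∀ a ∈ Z, ∀ b ∈ Z, a + b ∈ Z
  Z_mul : ∀ a ∈ Z, ∀ b ∈ Z, a * b ∈ Z
  Z_star : ∀ a ∈ Z, star a ∈ Z
  Z_smul : ∀ (c : ℂ), ∀ a ∈ Z, c • a ∈ Z
  Z_fixed : ∀ z ∈ Z, Φ z = z
  Z_central : ∀ z ∈ Z, ∀ a : A, z * Φ a = Φ a * z
  PhiS_add : ∀ x ∈ Φ '' S, ∀ y ∈ Φ '' S, x + y ∈ Φ '' S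
  PhiS_ideal_right : ∀ x ∈ Φ '' S, ∀ a : A, x * Φ a ∈ Φ '' S
  PhiS_ideal_left : ∀ x ∈ Φ '' S, ∀ a : A, Φ a * x ∈ Φ '' S
  S_sq_sub_PhiS : ∀ s ∈ S, star s * s ∈ Φ '' S
  PhiS_sub_S : ∀ s ∈ S, Φ s ∈ S

namespace StructuredCStar

variable (𝒜 : StructuredCStar A)

/-- `a <_s b` : domination witnessed by `s`. -/
def domBy (a s b : A) : Prop :=
  a = a * s * b ∧ a = b * s * a ∧
  a * s ∈ 𝒜.Φ '' 𝒜.S ∧ s * a ∈ 𝒜.Φ '' 𝒜.S ∧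
  b * s ∈ 𝒜.Z ∧ s * b ∈ 𝒜.Z

/-- `a < b` : domination. -/
def dom (a b : A) : Prop := ∃ s ∈ 𝒜.S, 𝒜.domBy a s b

/-- `N ⊆ S` is binormal. -/
def Binormal (N : Set A) : Prop :=
  ∀ a ∈ 𝒜.S, ∀ b ∈ 𝒜.S, a * b ∈ N → ∀ z ∈ N, a * z * b ∈ N

/-- `B ⊆ S` is bistable. -/
def Bistable (B : Set A) : Prop :=
  ∀ a ∈ 𝒜.S, ∀ b ∈ 𝒜.S, a * b ∈ B → 𝒜.Φ a * b ∈ B ∧ a * 𝒜.Φ b ∈ B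

/-- `P ⊆ S` is productive. -/
def Productive (P : Set A) : Prop :=
  ∀ a ∈ 𝒜.S, 𝒜.Φ a ∈ closure ((a * ·) '' P) ∧ 𝒜.Φ a ∈ closure ((· * a) '' P)

end StructuredCStar

/-!
If `a <_t b`, then `x := a * t` and `y := t * a` lie in `Φ[S]` and `a = x * b = b * y`. Whatever
right factor fixes `b` also fixes `x * b`, so `b = b * s * c` yields `a = a * s * c`, and
`a * s = x * (b * s)` lies in `Φ[S]` because `x` does and `Φ[S]` is an ideal of `Φ[A]`. The
remaining conditions on `a` are symmetric.
-/

namespace StructuredCStar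

section Semigroup

variable {M : Type*} [Semigroup M] {a b c s : M}

theorem eq_mul_mul_of_eq_mul_left {x : M} (hab : a = x * b) (hbc : b = b * s * c) :
    a = a * s * c :=
  calc
    a = x * (b * s * c) := by rw [← hbc, hab]
    _ = x * b * s * c := by simp only [mul_assoc]
    _ = a * s * c := by rw [← hab]

theorem eq_mul_mul_of_eq_mul_right {y : M} (hab : a = b * y) (hbc : b = c * s * b) :
    a = c * s * a :=
  calc
    a = c * s * b * y := by rw [← hbc, hab]
    _ = c * s * a := by rw [mul_assoc, ← hab]

end Semigroup

variable (𝒜 : StructuredCStar A) {a b c s x y : A}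

theorem mul_mem_image_of_eq_mul_left (hx : x ∈ 𝒜.Φ '' 𝒜.S) (hab : a = x * b)
    (hbs : b * s ∈ Set.range 𝒜.Φ) : a * s ∈ 𝒜.Φ '' 𝒜.S := by
  obtain ⟨d, hd⟩ := hbs
  rw [hab, mul_assoc, ← hd]
  exact 𝒜.PhiS_ideal_right x hx d

theorem mul_mem_image_of_eq_mul_right (hy : y ∈ 𝒜.Φ '' 𝒜.S) (hab : a = b * y)
    (hsb : s * b ∈ Set.range 𝒜.Φ) : s * a ∈ 𝒜.Φ '' 𝒜.S := by
  obtain ⟨d, hd⟩ := hsb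
  rw [hab, ← mul_assoc, ← hd]
  exact 𝒜.PhiS_ideal_left y hy d

theorem domBy_trans_general (hx : x ∈ 𝒜.Φ '' 𝒜.S) (hy : y ∈ 𝒜.Φ '' 𝒜.S) (hxb : a = x * b)
    (hby : a = b * y) (hbc : 𝒜.domBy b s c) : 𝒜.domBy a s c := by
  obtain ⟨hbsc, hcsb, hbs, hsb, hcs, hsc⟩ := hbc
  exact ⟨eq_mul_mul_of_eq_mul_left hxb hbsc, eq_mul_mul_of_eq_mul_right hby hcsb,
    𝒜.mul_mem_image_of_eq_mul_left hx hxb (Set.image_subset_range _ _ hbs),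
    𝒜.mul_mem_image_of_eq_mul_right hy hby (Set.image_subset_range _ _ hsb), hcs, hsc⟩

end StructuredCStar

/-- transitivity of domination: if `a < b` and `b <_s c` then `a <_s c`. -/
theorem StructuredCStar.domBy_trans (𝒜 : StructuredCStar A) {a b c s : A}
    (ha : a ∈ 𝒜.S) (hb : b ∈ 𝒜.S) (hc : c ∈ 𝒜.S) (hs : s ∈ 𝒜.S)
    (hab : 𝒜.dom a b) (hbc : 𝒜.domBy b s c) : 𝒜.domBy a s c := by
  obtain ⟨t, -, hatb, hbta, hat, hta, -, -⟩ := hab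
  exact 𝒜.domBy_trans_general hat hta hatb (hbta.trans (mul_assoc b t a)) hbc
end

section
/- Let (A,S,Z,Φ) be a structured C*-algebra. For all a,b,s ∈ S, if a <_s b then a* <_b s, i.e. a* = a*bs = sba*, a*b ∈ Φ[S], ba* ∈ Φ[S], sb ∈ Z and bs ∈ Z. -/
variable {A : Type*} [CStarAlgebra A] [PartialOrder A] [StarOrderedRing A]

/-!
The elements `b * s` and `s * b` lie in `Z`, so they are normal. If `z` is normal and `z * a = a`,
then `star z * a = a`, since `z - 1` and `star z - 1` have the same kernel. This turns
`a = b * s * a = a * s * b` into the two equations for `star a`.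

Substituting `a = b * s * (a * s * b)` and `a = b * s * (b * s * a)` gives
`star a * b = star b * q * b` and `b * star a = b * q' * star b`, where `q` and `q'` are products
of two elements of `Φ[S]`. Such conjugates are in `Φ[S]` by polarization, which reduces them to
elements `star t * t` with `t ∈ S`.
-/

section IsStarNormal

variable {R : Type*} [NonUnitalNormedRing R] [StarRing R] [CStarRing R] {z a : R}

theorem star_mul_eq_self_of_mul_eq_self [hz : IsStarNormal z] (h : z * a = a) :
    star z * a = a := by
  rw [← sub_eq_zero, ← CStarRing.star_mul_self_eq_zero_iff]
  calc star (star z * a - a) * (star z * a - a)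
      = star a * (z * star z) * a - star a * z * a - star a * star z * a + star a * a := by
        simp only [star_sub, star_mul, star_star]
        noncomm_ring
    _ = star (z * a - a) * (z * a - a) := by
        rw [← hz.star_comm_self.eq]
        simp only [star_sub, star_mul]
        noncomm_ring
    _ = 0 := by rw [h, sub_self, mul_zero]

theorem mul_star_eq_self_of_mul_eq_self [IsStarNormal z] (h : a * z = a) : a * star z = a := by
  have hstar : star z * star a = star a := by rw [← star_mul, h]
  simpa using congrArg star (star_mul_eq_self_of_mul_eq_self hstar)

end IsStarNormal

theorem star_mul_eq_sum_polarization {R : Type*} [NonUnitalRing R] [StarRing R] [Module ℂ R]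
    [StarModule ℂ R] [IsScalarTower ℂ R R] [SMulCommClass ℂ R R] (x y : R) :
    star x * y = ∑ k ∈ Finset.range 4, ((-Complex.I) ^ k / 4) •
      (star (x + Complex.I ^ k • y) * (x + Complex.I ^ k • y)) := by
  simp only [Finset.sum_range_succ, Finset.sum_range_zero, star_add, star_smul, add_mul, mul_add,
    smul_mul_assoc, mul_smul_comm, smul_add, smul_smul, star_pow, RCLike.star_def, Complex.conj_I]
  match_scalars <;> grind [Complex.I_sq]

namespace StructuredCStar

variable (𝒜 : StructuredCStar A) {x y z c : A}

theorem smul_mem_image_Φ (l : ℂ) (hx : x ∈ 𝒜.Φ '' 𝒜.S) : l • x ∈ 𝒜.Φ '' 𝒜.S := by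
  obtain ⟨t, ht, rfl⟩ := hx
  exact ⟨l • t, 𝒜.S_smul l t ht, map_smul _ _ _⟩

theorem image_Φ_subset_S : 𝒜.Φ '' 𝒜.S ⊆ 𝒜.S :=
  Set.image_subset_iff.mpr 𝒜.PhiS_sub_S

theorem Z_subset_image_Φ : 𝒜.Z ⊆ 𝒜.Φ '' 𝒜.S :=
  fun z hz ↦ ⟨z, 𝒜.Z_sub_S hz, 𝒜.Z_fixed z hz⟩

theorem isStarNormal_of_mem_Z (hz : z ∈ 𝒜.Z) : IsStarNormal z := by
  have hcomm : star z * 𝒜.Φ z = 𝒜.Φ z * star z := 𝒜.Z_central _ (𝒜.Z_star z hz) z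
  rw [𝒜.Z_fixed z hz] at hcomm
  exact ⟨hcomm⟩

theorem star_mul_star_mul_mul_mem_image_Φ (hx : x ∈ 𝒜.Φ '' 𝒜.S) (hy : y ∈ 𝒜.Φ '' 𝒜.S)
    (hc : c ∈ 𝒜.S) : star c * (star x * y) * c ∈ 𝒜.Φ '' 𝒜.S := by
  have hsq (l : ℂ) : star (x * c + l • (y * c)) * (x * c + l • (y * c)) ∈ 𝒜.Φ '' 𝒜.S := by
    have hxy : x + l • y ∈ 𝒜.S :=
      𝒜.image_Φ_subset_S (𝒜.PhiS_add x hx _ (𝒜.smul_mem_image_Φ l hy))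
    rw [← smul_mul_assoc, ← add_mul]
    exact 𝒜.S_sq_sub_PhiS _ (𝒜.S_mul _ hxy c hc)
  have hfactor : star c * (star x * y) * c = star (x * c) * (y * c) := by
    simp only [star_mul, mul_assoc]
  rw [hfactor, star_mul_eq_sum_polarization]
  exact Finset.sum_induction_nonempty _ (· ∈ 𝒜.Φ '' 𝒜.S) (fun u v hu hv ↦ 𝒜.PhiS_add u hu v hv)
    (by simp) fun k _ ↦ 𝒜.smul_mem_image_Φ _ (hsq _)

theorem star_domBy_general {a s b : A} (hb : b ∈ 𝒜.S) (h : 𝒜.domBy a s b) :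
    𝒜.domBy (star a) b s := by
  obtain ⟨hasb, hbsa, has, hsa, hbs, hsb⟩ := h
  have := 𝒜.isStarNormal_of_mem_Z hbs
  have := 𝒜.isStarNormal_of_mem_Z hsb
  have hbs_star : star (b * s) * a = a := star_mul_eq_self_of_mul_eq_self hbsa.symm
  have hsb_star : a * star (s * b) = a :=
    mul_star_eq_self_of_mul_eq_self (by rw [← mul_assoc, ← hasb])
  have hstar_a_mul_b : star a * b = star b * (star (a * s) * star (b * s)) * b := by
    calc star a * b = star (b * s * (a * s * b)) * b := by rw [← hasb, ← hbsa]
      _ = star b * (star (a * s) * star (b * s)) * b := by simp only [star_mul, mul_assoc]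
  have hb_mul_star_a : b * star a = star (star b) * (star (s * a) * star (s * b)) * star b := by
    calc b * star a = b * star (b * s * (b * s * a)) := by rw [← hbsa, ← hbsa]
      _ = star (star b) * (star (s * a) * star (s * b)) * star b := by
        simp only [star_mul, star_star, mul_assoc]
  refine ⟨?_, ?_, ?_, ?_, hsb, hbs⟩
  · simpa [mul_assoc] using (congrArg star hbs_star).symm
  · simpa using (congrArg star hsb_star).symm
  · rw [hstar_a_mul_b]
    exact 𝒜.star_mul_star_mul_mul_mem_image_Φ has (𝒜.Z_subset_image_Φ (𝒜.Z_star _ hbs)) hb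
  · rw [hb_mul_star_a]
    exact 𝒜.star_mul_star_mul_mul_mem_image_Φ hsa (𝒜.Z_subset_image_Φ (𝒜.Z_star _ hsb))
      (𝒜.S_star b hb)

end StructuredCStar

/-- if `a <_s b` then `a* <_b s`. -/
theorem StructuredCStar.star_domBy (𝒜 : StructuredCStar A) {a s b : A}
    (ha : a ∈ 𝒜.S) (hs : s ∈ 𝒜.S) (hb : b ∈ 𝒜.S)
    (h : 𝒜.domBy a s b) :
    star a = star a * b * s ∧ star a = s * b * star a ∧
    star a * b ∈ 𝒜.Φ '' 𝒜.S ∧ b * star a ∈ 𝒜.Φ '' 𝒜.S ∧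
    s * b ∈ 𝒜.Z ∧ b * s ∈ 𝒜.Z :=
  𝒜.star_domBy_general hb h
end

section
/- Let (A,S,Z,Φ) be a structured C*-algebra. If a,b ∈ S satisfy a < b, then there exists s ∈ S such that a <_s b and both sb and bs are positive elements of Z of norm at most 1. -/
variable {A : Type*} [CStarAlgebra A] [PartialOrder A] [StarOrderedRing A]

/-!
If `a <_s b`, then `a * (s * b) = a = (b * s) * a` and `s * (b * s) = (s * b) * s`: `s` intertwines
`b * s` with `s * b`, and `a` intertwines both of them with `1`. As these elements of `Z` are
normal, the Fuglede–Putnam theorem extends the relations to every continuous `f` applied to them.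
If moreover `f 0 = 0` and `f 1 = 1`, then `t = s * f (b * s) = f (s * b) * s` is again a witness of
`a < b`, with `t * b = (s * b) * f (s * b)` and `b * t = (b * s) * f (b * s)`. It remains to choose
`f` such that `z * f z` lies in the unit interval for all complex `z`.
-/

section Intertwining

variable {𝕜 B : Type*} {P : B → Prop} [RCLike 𝕜] [Ring B] [StarRing B] [Algebra 𝕜 B]
  [TopologicalSpace B] [ContinuousFunctionalCalculus 𝕜 B P] [IsSemitopologicalRing B] [T2Space B]
  {p q s : B}

lemma semiconjBy_cfcHomSuperset (hp : P p) (hq : P q) (h : SemiconjBy s p q)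
    (h_star : SemiconjBy s (star p) (star q)) {K : Set 𝕜} [CompactSpace K]
    (hpK : spectrum 𝕜 p ⊆ K) (hqK : spectrum 𝕜 q ⊆ K) (f : C(K, 𝕜)) :
    SemiconjBy s (cfcHomSuperset hp hpK f) (cfcHomSuperset hq hqK f) := by
  induction f using ContinuousMap.induction_on_of_compact with
  | const r =>
    have hr : ContinuousMap.const K r = algebraMap 𝕜 C(K, 𝕜) r := rfl
    rw [hr, AlgHomClass.commutes, AlgHomClass.commutes]
    exact Algebra.commute_algebraMap_right r s
  | id => rwa [cfcHomSuperset_id, cfcHomSuperset_id]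
  | star_id => rwa [map_star, map_star, cfcHomSuperset_id, cfcHomSuperset_id]
  | add f g hf hg => simpa only [map_add] using hf.add_right hg
  | mul f g hf hg => simpa only [map_mul] using hf.mul_right hg
  | frequently f hf =>
    have hp_cont := cfcHomSuperset_continuous hp hpK
    have hq_cont := cfcHomSuperset_continuous hq hqK
    exact hf.mem_of_closed (isClosed_eq (by fun_prop) (by fun_prop))

lemma semiconjBy_cfc (hp : P p) (hq : P q) (h : SemiconjBy s p q)
    (h_star : SemiconjBy s (star p) (star q)) {f : 𝕜 → 𝕜}
    (hf : ContinuousOn f (spectrum 𝕜 p ∪ spectrum 𝕜 q)) :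
    SemiconjBy s (cfc f p) (cfc f q) := by
  have : CompactSpace ↥(spectrum 𝕜 p ∪ spectrum 𝕜 q) :=
    isCompact_iff_compactSpace.mp <|
      (ContinuousFunctionalCalculus.isCompact_spectrum p).union
        (ContinuousFunctionalCalculus.isCompact_spectrum q)
  rw [cfc_apply f p hp (hf.mono Set.subset_union_left),
    cfc_apply f q hq (hf.mono Set.subset_union_right)]
  exact semiconjBy_cfcHomSuperset hp hq h h_star Set.subset_union_left Set.subset_union_right
    ⟨_, hf.domRestrict⟩

end Intertwining

section NormalIntertwining

variable {B : Type*} [CStarAlgebra B] {p q s : B} [IsStarNormal p] [IsStarNormal q] {f : ℂ → ℂ}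

lemma semiconjBy_cfc_of_isStarNormal (h : SemiconjBy s p q)
    (hf : ContinuousOn f (spectrum ℂ p ∪ spectrum ℂ q)) :
    SemiconjBy s (cfc f p) (cfc f q) :=
  semiconjBy_cfc ‹_› ‹_› h (h.star_right ‹_› ‹_›) hf

lemma mul_cfc_eq_smul_of_mul_eq_self (h : s * p = s)
    (hf : ContinuousOn f (spectrum ℂ p ∪ spectrum ℂ (1 : B))) : s * cfc f p = f 1 • s := by
  have h_one : SemiconjBy s p 1 := by rw [SemiconjBy, h, one_mul]
  rw [(semiconjBy_cfc_of_isStarNormal h_one hf).eq, cfc_apply_one, ← Algebra.smul_def]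

lemma cfc_mul_eq_smul_of_mul_eq_self (h : q * s = s)
    (hf : ContinuousOn f (spectrum ℂ (1 : B) ∪ spectrum ℂ q)) : cfc f q * s = f 1 • s := by
  have h_one : SemiconjBy s 1 q := by rw [SemiconjBy, h, mul_one]
  rw [← (semiconjBy_cfc_of_isStarNormal h_one hf).eq, cfc_apply_one, ← Algebra.commutes,
    ← Algebra.smul_def]

end NormalIntertwining

section ProductIntertwining

variable {B : Type*} [CStarAlgebra B] {s b : B} [IsStarNormal (b * s)] [IsStarNormal (s * b)]
  {f : ℂ → ℂ}

lemma mul_cfc_mul_eq_cfc_mul_mul (hf : ContinuousOn f (spectrum ℂ (b * s) ∪ spectrum ℂ (s * b))) :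
    s * cfc f (b * s) = cfc f (s * b) * s :=
  (semiconjBy_cfc_of_isStarNormal (mul_assoc s b s).symm hf).eq

lemma mul_cfc_mul_mul_eq_mul_mul_cfc_mul
    (hf : ContinuousOn f (spectrum ℂ (b * s) ∪ spectrum ℂ (s * b))) :
    s * cfc f (b * s) * b = s * b * cfc f (s * b) := by
  rw [mul_cfc_mul_eq_cfc_mul_mul hf, mul_assoc]
  exact (Commute.refl _).cfc (star_comm_self' _) f

end ProductIntertwining

section TruncatedInverse

open scoped ComplexOrder ComplexConjugate

/-- The truncated inversion of the complex plane: `z⁻¹` outside the unit disc and `conj z` inside.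
It serves as a continuous substitute for `z⁻¹` that vanishes at `0`. -/
noncomputable def truncInv (z : ℂ) : ℂ := conj z / (max 1 (‖z‖ ^ 2) : ℝ)

lemma truncInv_zero : truncInv 0 = 0 := by simp [truncInv]

lemma truncInv_one : truncInv 1 = 1 := by simp [truncInv]

lemma continuous_truncInv : Continuous truncInv := by
  have h_ne (z : ℂ) : ((max 1 (‖z‖ ^ 2) : ℝ) : ℂ) ≠ 0 :=
    Complex.ofReal_ne_zero.mpr (zero_lt_one.trans_le (le_max_left ..)).ne'
  exact Complex.continuous_conj.div (by fun_prop) h_ne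

lemma mul_truncInv (z : ℂ) : z * truncInv z = (min 1 (‖z‖ ^ 2) : ℝ) := by
  have h_ne : max 1 (‖z‖ ^ 2) ≠ 0 := (zero_lt_one.trans_le (le_max_left ..)).ne'
  rw [truncInv, ← mul_div_assoc, Complex.mul_conj', ← Complex.ofReal_pow, ← Complex.ofReal_div,
    Complex.ofReal_inj, div_eq_iff h_ne, min_mul_max, one_mul]

variable {B : Type*} [CStarAlgebra B] (p : B) [IsStarNormal p]

lemma mul_cfc_truncInv :
    p * cfc truncInv p = cfc (fun z : ℂ ↦ ((min 1 (‖z‖ ^ 2) : ℝ) : ℂ)) p := by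
  have h_mul := cfc_mul (fun z ↦ z) truncInv p (hg := continuous_truncInv.continuousOn)
  rw [cfc_id' ℂ p] at h_mul
  simp only [← h_mul, mul_truncInv]

lemma mul_cfc_truncInv_nonneg [PartialOrder B] [StarOrderedRing B] : 0 ≤ p * cfc truncInv p := by
  rw [mul_cfc_truncInv]
  exact cfc_nonneg fun z _ ↦ by positivity

lemma norm_mul_cfc_truncInv_le_one : ‖p * cfc truncInv p‖ ≤ 1 := by
  rw [mul_cfc_truncInv]
  refine norm_cfc_le zero_le_one fun z _ ↦ ?_
  rw [Complex.norm_of_nonneg (by positivity)]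
  exact min_le_left ..

end TruncatedInverse

namespace StructuredCStar

variable {𝒜 : StructuredCStar A} {a b s p : A} {f : ℂ → ℂ}

lemma isStarNormal_of_mem_Z_s2 (hp : p ∈ 𝒜.Z) : IsStarNormal p := by
  have h := 𝒜.Z_central (star p) (𝒜.Z_star p hp) p
  rw [𝒜.Z_fixed p hp] at h
  exact ⟨h⟩

lemma cfc_mem_Z (hp : p ∈ 𝒜.Z) (hf : ContinuousOn f (quasispectrum ℂ p)) (hf₀ : f 0 = 0) :
    cfc f p ∈ 𝒜.Z := by
  let Z' : NonUnitalStarSubalgebra ℂ A :=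
    { carrier := 𝒜.Z
      add_mem' {x y} hx hy := 𝒜.Z_add x hx y hy
      zero_mem' := by simpa using 𝒜.Z_smul 0 p hp
      mul_mem' {x y} hx hy := 𝒜.Z_mul x hx y hy
      smul_mem' c {x} hx := 𝒜.Z_smul c x hx
      star_mem' {x} hx := 𝒜.Z_star x hx }
  have : IsClosed (Z' : Set A) := 𝒜.Z_isClosed
  rw [← cfcₙ_eq_cfc hf hf₀]
  exact cfcₙ_mem (𝕜' := ℂ) (s := Z') f hp

lemma domBy.mul_cfc (h : 𝒜.domBy a s b) (hf : Continuous f) (hf₀ : f 0 = 0) (hf₁ : f 1 = 1) :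
    𝒜.domBy a (s * cfc f (b * s)) b := by
  obtain ⟨hasb, hbsa, has, hsa, hbs, hsb⟩ := h
  have := isStarNormal_of_mem_Z_s2 hbs
  have := isStarNormal_of_mem_Z_s2 hsb
  have h_swap : s * cfc f (b * s) = cfc f (s * b) * s :=
    mul_cfc_mul_eq_cfc_mul_mul hf.continuousOn
  have h_swap_mul : s * cfc f (b * s) * b = s * b * cfc f (s * b) :=
    mul_cfc_mul_mul_eq_mul_mul_cfc_mul hf.continuousOn
  have ha_right : a * (s * b) = a := by rw [← mul_assoc, ← hasb]
  have ha_left : b * s * a = a := hbsa.symm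
  have ha_cfc : a * cfc f (s * b) = a := by
    simpa [hf₁] using mul_cfc_eq_smul_of_mul_eq_self ha_right hf.continuousOn
  have hcfc_a : cfc f (b * s) * a = a := by
    simpa [hf₁] using cfc_mul_eq_smul_of_mul_eq_self ha_left hf.continuousOn
  refine ⟨?_, ?_, ?_, ?_, ?_, ?_⟩
  · rw [mul_assoc, h_swap_mul, ← mul_assoc, ha_right, ha_cfc]
  · rw [← mul_assoc, mul_assoc, hcfc_a, ha_left]
  · rwa [h_swap, ← mul_assoc, ha_cfc]
  · rwa [mul_assoc, hcfc_a]
  · rw [← mul_assoc]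
    exact 𝒜.Z_mul _ hbs _ (cfc_mem_Z hbs hf.continuousOn hf₀)
  · rw [h_swap_mul]
    exact 𝒜.Z_mul _ hsb _ (cfc_mem_Z hsb hf.continuousOn hf₀)

end StructuredCStar

/-- if `a < b` then there is a witness `s` with `s * b` and `b * s`
positive elements of `Z` of norm at most `1`. -/
theorem StructuredCStar.exists_domBy_witness_pos_unitBall (𝒜 : StructuredCStar A)
    {a b : A} (ha : a ∈ 𝒜.S) (hb : b ∈ 𝒜.S) (h : 𝒜.dom a b) :
    ∃ s ∈ 𝒜.S, 𝒜.domBy a s b ∧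
      0 ≤ s * b ∧ ‖s * b‖ ≤ 1 ∧ 0 ≤ b * s ∧ ‖b * s‖ ≤ 1 := by
  obtain ⟨s, hs, h⟩ := h
  have ⟨_, _, _, _, hbs, hsb⟩ := h
  have := isStarNormal_of_mem_Z_s2 hbs
  have := isStarNormal_of_mem_Z_s2 hsb
  have h_cfc_mem : cfc truncInv (b * s) ∈ 𝒜.Z :=
    cfc_mem_Z hbs continuous_truncInv.continuousOn truncInv_zero
  refine ⟨s * cfc truncInv (b * s), 𝒜.S_mul s hs _ (𝒜.Z_sub_S h_cfc_mem),
    h.mul_cfc continuous_truncInv truncInv_zero truncInv_one, ?_⟩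
  rw [mul_cfc_mul_mul_eq_mul_mul_cfc_mul continuous_truncInv.continuousOn, ← mul_assoc]
  exact ⟨mul_cfc_truncInv_nonneg _, norm_mul_cfc_truncInv_le_one _,
    mul_cfc_truncInv_nonneg _, norm_mul_cfc_truncInv_le_one _⟩
end

section
/- Let (A,S,Z,Φ) be a structured C*-algebra. If a ∈ S, b ∈ Z and a < b, then there exists z ∈ Z with a <_z b. -/
variable {A : Type*} [CStarAlgebra A] [PartialOrder A] [StarOrderedRing A]

/-!
If `b * s = e ∈ Z`, then `b * s + (1 - e) * 1 = 1`, so by Cauchy–Schwarz in the Hilbert module of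
pairs `u = b * star b + (1 - e) * star (1 - e)` is invertible. By spectral permanence `u⁻¹`
multiplies `Z` into itself, so `z = star b * u⁻¹` lies in `Z`. If moreover `a * e = a`, then
`a * u = a * b * star b`, that is, `a = a * b * z`.
-/

section CStarModule

variable {B E : Type*} [CStarAlgebra B] [PartialOrder B] [StarOrderedRing B] [AddCommGroup E]
  [Module ℂ E] [SMul B E] [Norm E] [CStarModule B E]

theorem isUnit_inner_self_of_isUnit_inner {x y : E} (h : IsUnit (inner B x y)) :
    IsUnit (inner B y y) := by
  have hpos : IsStrictlyPositive (inner B x y * inner B y x) := by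
    rw [← CStarModule.star_inner x y]
    exact (h.mul h.star).isStrictlyPositive (mul_star_self_nonneg _)
  have hunit : IsUnit (‖x‖ ^ 2 • inner B y y) :=
    CStarAlgebra.isUnit_of_le _ CStarModule.inner_mul_inner_swap_le hpos
  rw [Algebra.smul_def] at hunit
  exact ((Algebra.commute_algebraMap_left _ _).isUnit_mul_iff.mp hunit).2

end CStarModule

theorem isUnit_mul_star_add_mul_star {B : Type*} [CStarAlgebra B] {x y s t : B}
    (h : IsUnit (x * s + y * t)) : IsUnit (x * star x + y * star y) := by
  let := CStarAlgebra.spectralOrder B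
  have := CStarAlgebra.spectralOrderedRing B
  let v : WithCStarModule B (B × B) := (WithCStarModule.equiv B (B × B)).symm (star s, star t)
  let w : WithCStarModule B (B × B) := (WithCStarModule.equiv B (B × B)).symm (x, y)
  have hvw : inner B v w = x * s + y * t := by
    simp [v, w, WithCStarModule.prod_inner, WithCStarModule.inner_def]
  exact isUnit_inner_self_of_isUnit_inner (hvw ▸ h)

theorem units_inv_mem_of_isClosed {B : Type*} [CStarAlgebra B] {C : StarSubalgebra ℂ B}
    (hC : IsClosed (C : Set B)) {u : Bˣ} (hu : (u : B) ∈ C) : ((u⁻¹ : Bˣ) : B) ∈ C := by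
  obtain ⟨v, hv⟩ := (C.coe_isUnit (a := ⟨u, hu⟩)).mp u.isUnit
  have huv : Units.map (C.subtype : C →* B) v = u := Units.ext (congrArg Subtype.val hv)
  rw [← huv]
  exact ((v⁻¹ : Cˣ) : C).property

section Idealizer

variable {R B : Type*} [CommSemiring R] [StarRing R] [Semiring B] [StarRing B] [Algebra R B]
  [StarModule R B]

/-- The idealizer of a non-unital star subalgebra `C`: the largest star subalgebra of the ambient
algebra in which `C` is a two-sided ideal. -/
def idealizer (C : NonUnitalStarSubalgebra R B) : StarSubalgebra R B where
  carrier := {y | ∀ c ∈ C, y * c ∈ C ∧ c * y ∈ C}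
  mul_mem' {x y} hx hy c hc :=
    ⟨mul_assoc x y c ▸ (hx _ (hy c hc).1).1, mul_assoc c x y ▸ (hy _ (hx c hc).2).2⟩
  add_mem' {x y} hx hy c hc :=
    ⟨add_mul x y c ▸ add_mem (hx c hc).1 (hy c hc).1,
      mul_add c x y ▸ add_mem (hx c hc).2 (hy c hc).2⟩
  algebraMap_mem' r c hc := by
    rw [← Algebra.commutes, ← Algebra.smul_def]
    exact ⟨C.smul_mem r hc, C.smul_mem r hc⟩
  star_mem' {x} hx c hc := by
    have h := hx (star c) (star_mem hc)
    exact ⟨by simpa using star_mem h.2, by simpa using star_mem h.1⟩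

theorem mem_idealizer {C : NonUnitalStarSubalgebra R B} {y : B} :
    y ∈ idealizer C ↔ ∀ c ∈ C, y * c ∈ C ∧ c * y ∈ C :=
  Iff.rfl

theorem subset_idealizer (C : NonUnitalStarSubalgebra R B) : (C : Set B) ⊆ idealizer C :=
  fun _ hy _ hc => ⟨mul_mem hy hc, mul_mem hc hy⟩

theorem isClosed_idealizer [TopologicalSpace B] [SeparatelyContinuousMul B]
    {C : NonUnitalStarSubalgebra R B} (hC : IsClosed (C : Set B)) :
    IsClosed (idealizer C : Set B) := by
  have h : (idealizer C : Set B) = ⋂ c ∈ C, (· * c) ⁻¹' C ∩ (c * ·) ⁻¹' C := by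
    ext y
    simp [mem_idealizer]
  rw [h]
  exact isClosed_biInter fun c _ =>
    (hC.preimage (continuous_mul_const c)).inter (hC.preimage (continuous_const_mul c))

end Idealizer

theorem exists_mem_forall_mul_mul_eq_self {B : Type*} [CStarAlgebra B]
    {C : NonUnitalStarSubalgebra ℂ B} (hC : IsClosed (C : Set B)) {b s : B} (hb : b ∈ C)
    (hbs : b * s ∈ C) : ∃ z ∈ C, ∀ a, a * (b * s) = a → a * (b * z) = a := by
  obtain ⟨u, hu⟩ : IsUnit (b * star b + (1 - b * s) * star (1 - b * s)) :=
    isUnit_mul_star_add_mul_star (s := s) (t := 1) (by simp)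
  have hu_mem : (u : B) ∈ idealizer C := by
    have hb' : b ∈ idealizer C := subset_idealizer C hb
    have he' : 1 - b * s ∈ idealizer C := sub_mem (one_mem _) (subset_idealizer C hbs)
    rw [hu]
    exact add_mem (mul_mem hb' (star_mem hb')) (mul_mem he' (star_mem he'))
  have huinv_mem : ((u⁻¹ : Bˣ) : B) ∈ idealizer C :=
    units_inv_mem_of_isClosed (isClosed_idealizer hC) hu_mem
  refine ⟨star b * (u⁻¹ : Bˣ), (huinv_mem _ (star_mem hb)).2, fun a ha => ?_⟩
  have hae : a * (1 - b * s) = 0 := by rw [mul_sub, mul_one, ha, sub_self]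
  have hau : a * u = a * (b * star b) := by
    rw [hu, mul_add, ← mul_assoc a (1 - b * s), hae, zero_mul, add_zero]
  rw [← mul_assoc b, ← mul_assoc a, ← hau, Units.mul_inv_cancel_right]

namespace StructuredCStar

variable (𝒜 : StructuredCStar A) {a b s z : A}

/-- `Z` as a non-unital star subalgebra. An empty `Z`, possible in `StructuredCStar`, contains no
zero and is excluded. -/
def ZSubalgebra (hZ : 𝒜.Z.Nonempty) : NonUnitalStarSubalgebra ℂ A where
  carrier := 𝒜.Z
  add_mem' {x y} hx hy := 𝒜.Z_add x hx y hy
  zero_mem' := by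
    obtain ⟨z, hz⟩ := hZ
    simpa using 𝒜.Z_smul 0 z hz
  mul_mem' {x y} hx hy := 𝒜.Z_mul x hx y hy
  smul_mem' c x hx := 𝒜.Z_smul c x hx
  star_mem' {x} hx := 𝒜.Z_star x hx

variable {𝒜}

theorem Φ_eq_self_of_domBy (hΦb : 𝒜.Φ b = b) (h : 𝒜.domBy a s b) : 𝒜.Φ a = a := by
  obtain ⟨hasb, -, ⟨t, -, ht⟩, -⟩ := h
  rw [hasb, ← ht, 𝒜.Φ_mul_left, hΦb]

theorem commute_of_mem_Z (hz : z ∈ 𝒜.Z) (hΦa : 𝒜.Φ a = a) : Commute z a :=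
  hΦa ▸ 𝒜.Z_central z hz a

theorem mul_mem_image_Φ (ha : a ∈ 𝒜.S) (hΦa : 𝒜.Φ a = a) (hb : b ∈ 𝒜.S) (hΦb : 𝒜.Φ b = b) :
    a * b ∈ 𝒜.Φ '' 𝒜.S :=
  ⟨a * b, 𝒜.S_mul a ha b hb, by simpa only [hΦa, hΦb] using 𝒜.Φ_mul_left a b⟩

theorem domBy_of_mul_eq_self (ha : a ∈ 𝒜.S) (hΦa : 𝒜.Φ a = a) (hb : b ∈ 𝒜.Z) (hz : z ∈ 𝒜.Z)
    (h : a * (b * z) = a) : 𝒜.domBy a z b := by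
  have hbz : b * z ∈ 𝒜.Z := 𝒜.Z_mul b hb z hz
  have hzb : Commute z b := commute_of_mem_Z hz (𝒜.Z_fixed b hb)
  have haz : a * z ∈ 𝒜.Φ '' 𝒜.S := mul_mem_image_Φ ha hΦa (𝒜.Z_sub_S hz) (𝒜.Z_fixed z hz)
  refine ⟨?_, ?_, haz, ?_, hbz, hzb.eq ▸ hbz⟩
  · rw [mul_assoc, hzb.eq, h]
  · rw [(commute_of_mem_Z hbz hΦa).eq, h]
  · rwa [(commute_of_mem_Z hz hΦa).eq]

theorem dom_Z_witness_general (ha : a ∈ 𝒜.S) (hΦa : 𝒜.Φ a = a) (hb : b ∈ 𝒜.Z)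
    (hbs : b * s ∈ 𝒜.Z) (h : b * s * a = a) : ∃ z ∈ 𝒜.Z, 𝒜.domBy a z b := by
  obtain ⟨z, hz, hbz⟩ :=
    exists_mem_forall_mul_mul_eq_self (C := 𝒜.ZSubalgebra ⟨b, hb⟩) 𝒜.Z_isClosed hb hbs
  have habs : a * (b * s) = a := (commute_of_mem_Z hbs hΦa).eq ▸ h
  exact ⟨z, hz, domBy_of_mul_eq_self ha hΦa hb hz (hbz a habs)⟩

end StructuredCStar

/-- if `a < b ∈ Z` then `a <_z b` for some `z ∈ Z`. -/
theorem StructuredCStar.dom_Z_witness (𝒜 : StructuredCStar A) {a b : A}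
    (ha : a ∈ 𝒜.S) (hb : b ∈ 𝒜.Z) (h : 𝒜.dom a b) :
    ∃ z ∈ 𝒜.Z, 𝒜.domBy a z b := by
  obtain ⟨s, -, hs⟩ := h
  have hΦa : 𝒜.Φ a = a := Φ_eq_self_of_domBy (𝒜.Z_fixed b hb) hs
  obtain ⟨-, hbsa, -, -, hbs, -⟩ := hs
  exact dom_Z_witness_general ha hΦa hb hbs hbsa.symm
end

section
/- Let (A,S,Z,Φ) be a structured C*-algebra in which Z is binormal. If a,s,b ∈ S satisfy a <_s b, and y,z ∈ Z satisfy y = yz, then a − az and b − by lie in S and a − az <_s b − by. -/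
variable {A : Type*} [CStarAlgebra A] [PartialOrder A] [StarOrderedRing A]

/-!
The heart of the matter is that `b - b * y` lies in `S`, although `S` is not closed under addition.
Factor it approximately as `b * (e - e * y)` with `e` close to a right unit for `b`: taking
`e = h (h + t)⁻¹` for `h = star b * b` and small `t > 0` gives an element of the closed subalgebra
`Φ[S]`, which is an ideal of `Φ[A]`, so `e - e * y` is again in `Φ[S] ⊆ S`.

The domination relations then follow by moving `z` past `s * b` and `s * a`, both fixed by `Φ`.
Only the membership of `a * z * s` in `Φ[S]` takes a detour: `a * z * s = (a * s) * (b * z * s)`,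
and the second factor is in `Z` by binormality.
-/

section CStarAlgebra

variable {E : Type*} [NonUnitalCStarAlgebra E]

theorem star_sub_mul_cfcₙ_mul_self (b : E) {f : ℝ → ℝ}
    (hf : ContinuousOn f (quasispectrum ℝ (star b * b))) (hf₀ : f 0 = 0) :
    star (b - b * cfcₙ f (star b * b)) * (b - b * cfcₙ f (star b * b)) =
      cfcₙ (fun x ↦ x * (1 - f x) ^ 2) (star b * b) := by
  set h := star b * b with h_def
  have star_cfc : star (cfcₙ f h) = cfcₙ f h := (cfcₙ_predicate f h : IsSelfAdjoint _).star_eq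
  have cfc_id_sub : cfcₙ (fun x ↦ x - x * f x) h = h - h * cfcₙ f h := by
    rw [cfcₙ_sub _ _ h, cfcₙ_mul _ _ h, cfcₙ_id' ℝ h]
  calc star (b - b * cfcₙ f h) * (b - b * cfcₙ f h)
      = (h - h * cfcₙ f h) - cfcₙ f h * (h - h * cfcₙ f h) := by
        rw [star_sub, star_mul, star_cfc, h_def]
        noncomm_ring
    _ = cfcₙ (fun x ↦ (x - x * f x) - f x * (x - x * f x)) h := by
        rw [cfcₙ_sub _ _ h, cfcₙ_mul _ _ h, cfc_id_sub]
    _ = cfcₙ (fun x ↦ x * (1 - f x) ^ 2) h := by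
        congr! 2 with x
        ring

theorem mul_one_sub_div_add_sq_le {t x : ℝ} (ht : 0 < t) (hx : 0 ≤ x) :
    x * (1 - x / (x + t)) ^ 2 ≤ t := by
  have hxt : 0 < x + t := by positivity
  rw [one_sub_div hxt.ne', add_sub_cancel_left, div_pow, mul_div_assoc',
    div_le_iff₀ (by positivity)]
  nlinarith [mul_nonneg ht.le (sq_nonneg x), mul_nonneg hx (sq_nonneg t), pow_pos ht 3]

variable [PartialOrder E] [StarOrderedRing E]

theorem norm_sub_mul_cfcₙ_div_add_sq_le (b : E) {t : ℝ} (ht : 0 < t) :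
    ‖b - b * cfcₙ (fun x : ℝ ↦ x / (x + t)) (star b * b)‖ ^ 2 ≤ t := by
  have spectrum_nonneg : ∀ x ∈ quasispectrum ℝ (star b * b), 0 ≤ x :=
    quasispectrum_nonneg_of_nonneg _ (star_mul_self_nonneg b)
  have continuousOn_div_add :
      ContinuousOn (fun x : ℝ ↦ x / (x + t)) (quasispectrum ℝ (star b * b)) :=
    continuousOn_id.div (by fun_prop) fun x hx ↦
      (add_pos_of_nonneg_of_pos (spectrum_nonneg x hx) ht).ne'
  rw [sq, ← CStarRing.norm_star_mul_self,
    star_sub_mul_cfcₙ_mul_self b continuousOn_div_add (zero_div _)]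
  refine norm_cfcₙ_le fun x hx ↦ ?_
  have hx₀ := spectrum_nonneg x hx
  rw [Real.norm_of_nonneg (by positivity)]
  exact mul_one_sub_div_add_sq_le ht hx₀

theorem mem_closure_mul_left_image_of_star_mul_self_mem {B : NonUnitalStarSubalgebra ℂ E}
    (hB : IsClosed (B : Set E)) {b : E} (hb : star b * b ∈ B) :
    b ∈ closure ((b * ·) '' (B : Set E)) := by
  refine Metric.mem_closure_iff.2 fun ε hε ↦ ?_
  have hmem := cfcₙ_mem (hs := hB) (fun x : ℝ ↦ x / (x + (ε / 2) ^ 2)) hb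
  refine ⟨_, ⟨_, hmem, rfl⟩, ?_⟩
  rw [dist_eq_norm]
  have hle := norm_sub_mul_cfcₙ_div_add_sq_le b (t := (ε / 2) ^ 2) (by positivity)
  exact (le_of_sq_le_sq hle (by positivity)).trans_lt (half_lt_self hε)

end CStarAlgebra

section Ring

variable {R : Type*} [NonUnitalRing R] {a s b y z : R}

theorem sub_mul_mul_sub_mul_of_commute_right (hasb : a * s * b = a) (hz : Commute z (s * b))
    (hzy : z * y = y) : (a - a * z) * s * (b - b * y) = a - a * z := by
  have hazsb : a * z * s * b = a * z := by
    rw [mul_assoc, mul_assoc, hz.eq, ← mul_assoc, ← mul_assoc, hasb]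
  calc (a - a * z) * s * (b - b * y)
      = (a * s * b - a * z * s * b) - (a * s * b - a * z * s * b) * y := by noncomm_ring
    _ = (a - a * z) - (a * y - a * (z * y)) := by rw [hasb, hazsb]; noncomm_ring
    _ = a - a * z := by rw [hzy, sub_self, sub_zero]

theorem sub_mul_mul_sub_mul_of_commute_left (hbsa : b * s * a = a) (hz : Commute z (s * a))
    (hyz : y * z = y) : (b - b * y) * s * (a - a * z) = a - a * z := by
  have hsaz : s * a * z = z * (s * a) := hz.eq.symm
  calc (b - b * y) * s * (a - a * z)
      = (b * s * a - b * s * a * z) - b * y * (s * a - s * a * z) := by noncomm_ring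
    _ = (a - a * z) - b * (y - y * z) * (s * a) := by rw [hbsa, hsaz]; noncomm_ring
    _ = a - a * z := by rw [hyz, sub_self, mul_zero, zero_mul, sub_zero]

end Ring

namespace StructuredCStar

variable (𝒜 : StructuredCStar A)

theorem continuous_Φ : Continuous 𝒜.Φ :=
  AddMonoidHomClass.continuous_of_bound 𝒜.Φ 1 fun x ↦ by simpa using 𝒜.Φ_contractive x

theorem Φ_star (x : A) : 𝒜.Φ (star x) = star (𝒜.Φ x) :=
  map_star (PositiveLinearMap.mk₀ 𝒜.Φ 𝒜.Φ_pos) x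

/-- The ideal `Φ[S]` of `Φ[A]` as a *-subalgebra of `A`, the form in which the non-unital continuous
functional calculus applies to it. The instance argument is there because the axioms of
`StructuredCStar` are also met by `S = ∅`, where `Φ[S]` has no zero. -/
def PhiS [Nonempty 𝒜.S] : NonUnitalStarSubalgebra ℂ A where
  carrier := 𝒜.Φ '' 𝒜.S
  zero_mem' := by
    obtain ⟨s, hs⟩ := ‹Nonempty 𝒜.S›
    exact ⟨(0 : ℂ) • s, 𝒜.S_smul 0 s hs, by simp only [zero_smul, map_zero]⟩
  add_mem' hx hy := 𝒜.PhiS_add _ hx _ hy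
  mul_mem' := by
    rintro x _ hx ⟨s, -, rfl⟩
    exact 𝒜.PhiS_ideal_right x hx s
  smul_mem' := by
    rintro c _ ⟨s, hs, rfl⟩
    exact ⟨c • s, 𝒜.S_smul c s hs, map_smul _ _ _⟩
  star_mem' := by
    rintro _ ⟨s, hs, rfl⟩
    exact ⟨star s, 𝒜.S_star s hs, 𝒜.Φ_star s⟩

variable {𝒜}

theorem mem_PhiS_iff [Nonempty 𝒜.S] {x : A} : x ∈ 𝒜.PhiS ↔ x ∈ 𝒜.S ∧ 𝒜.Φ x = x := by
  refine ⟨?_, fun ⟨hx, hΦx⟩ ↦ ⟨x, hx, hΦx⟩⟩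
  rintro ⟨s, hs, rfl⟩
  exact ⟨𝒜.PhiS_sub_S s hs, 𝒜.Φ_idem s⟩

theorem isClosed_PhiS [Nonempty 𝒜.S] : IsClosed (𝒜.PhiS : Set A) := by
  have heq : (𝒜.PhiS : Set A) = 𝒜.S ∩ {x | 𝒜.Φ x = x} := Set.ext fun _ ↦ mem_PhiS_iff
  rw [heq]
  exact 𝒜.S_isClosed.inter (isClosed_eq 𝒜.continuous_Φ continuous_id)

theorem mem_PhiS_of_mem_Z [Nonempty 𝒜.S] {z : A} (hz : z ∈ 𝒜.Z) : z ∈ 𝒜.PhiS :=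
  mem_PhiS_iff.2 ⟨𝒜.Z_sub_S hz, 𝒜.Z_fixed z hz⟩

theorem commute_of_mem_Z_of_Φ_eq {z x : A} (hz : z ∈ 𝒜.Z) (hx : 𝒜.Φ x = x) : Commute z x :=
  hx ▸ 𝒜.Z_central z hz x

theorem sub_mem_Z {x y : A} (hx : x ∈ 𝒜.Z) (hy : y ∈ 𝒜.Z) : x - y ∈ 𝒜.Z := by
  simpa only [neg_one_smul, ← sub_eq_add_neg] using 𝒜.Z_add x hx _ (𝒜.Z_smul (-1) y hy)

theorem sub_mul_Φ_mem_S {b : A} (hb : b ∈ 𝒜.S) (x : A) : b - b * 𝒜.Φ x ∈ 𝒜.S := by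
  have : Nonempty 𝒜.S := ⟨⟨b, hb⟩⟩
  have b_mem_closure : b ∈ closure ((b * ·) '' (𝒜.PhiS : Set A)) :=
    mem_closure_mul_left_image_of_star_mul_self_mem isClosed_PhiS (𝒜.S_sq_sub_PhiS b hb)
  have mapsTo_S : Set.MapsTo (fun c ↦ c - c * 𝒜.Φ x) ((b * ·) '' (𝒜.PhiS : Set A)) 𝒜.S := by
    rintro _ ⟨e, he, rfl⟩
    have he_sub : e - e * 𝒜.Φ x ∈ 𝒜.PhiS := sub_mem he (𝒜.PhiS_ideal_right e he x)
    simpa only [mul_sub, mul_assoc] using 𝒜.S_mul b hb _ (mem_PhiS_iff.1 he_sub).1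
  exact 𝒜.S_isClosed.closure_subset
    (map_mem_closure (f := fun c ↦ c - c * 𝒜.Φ x) (by fun_prop) b_mem_closure mapsTo_S)

theorem sub_mul_mem_S {b y : A} (hb : b ∈ 𝒜.S) (hy : y ∈ 𝒜.Z) : b - b * y ∈ 𝒜.S := by
  simpa only [𝒜.Z_fixed y hy] using sub_mul_Φ_mem_S hb y

theorem mul_mul_mem_PhiS_of_binormal [Nonempty 𝒜.S] (hZ : 𝒜.Binormal 𝒜.Z) {a s b z : A}
    (hs : s ∈ 𝒜.S) (hb : b ∈ 𝒜.S) (hasb : a = a * s * b) (has : a * s ∈ 𝒜.PhiS) (hbs : b * s ∈ 𝒜.Z)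
    (hz : z ∈ 𝒜.Z) : a * z * s ∈ 𝒜.PhiS := by
  have hazs : a * z * s = a * s * (b * z * s) := by
    conv_lhs => rw [hasb]
    simp only [mul_assoc]
  rw [hazs]
  exact mul_mem has (mem_PhiS_of_mem_Z (hZ b hb s hs hbs z hz))

end StructuredCStar

/-- if `Z` is binormal, `a <_s b`, `y, z ∈ Z` and `y = yz`, then
`a - az` and `b - by` lie in `S` and `a - az <_s b - by`. -/
theorem StructuredCStar.domBy_sub (𝒜 : StructuredCStar A)
    (hZ : 𝒜.Binormal 𝒜.Z) {a s b : A}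
    (ha : a ∈ 𝒜.S) (hs : s ∈ 𝒜.S) (hb : b ∈ 𝒜.S)
    (h : 𝒜.domBy a s b) {y z : A} (hy : y ∈ 𝒜.Z) (hz : z ∈ 𝒜.Z)
    (hyz : y = y * z) :
    a - a * z ∈ 𝒜.S ∧ b - b * y ∈ 𝒜.S ∧
      𝒜.domBy (a - a * z) s (b - b * y) := by
  obtain ⟨hasb, hbsa, has, hsa, hbs, hsb⟩ := h
  have : Nonempty 𝒜.S := ⟨⟨a, ha⟩⟩
  have hzy : z * y = y :=
    (commute_of_mem_Z_of_Φ_eq hz (𝒜.Z_fixed y hy)).eq.trans hyz.symm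
  have z_comm_sb : Commute z (s * b) := commute_of_mem_Z_of_Φ_eq hz (𝒜.Z_fixed _ hsb)
  have z_comm_sa : Commute z (s * a) := commute_of_mem_Z_of_Φ_eq hz (mem_PhiS_iff.1 hsa).2
  refine ⟨sub_mul_mem_S ha hz, sub_mul_mem_S hb hy,
    (sub_mul_mul_sub_mul_of_commute_right hasb.symm z_comm_sb hzy).symm,
    (sub_mul_mul_sub_mul_of_commute_left hbsa.symm z_comm_sa hyz.symm).symm, ?_, ?_, ?_, ?_⟩
  · rw [sub_mul]
    exact 𝒜.PhiS.sub_mem has (mul_mul_mem_PhiS_of_binormal hZ hs hb hasb has hbs hz)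
  · rw [mul_sub, ← mul_assoc]
    exact 𝒜.PhiS.sub_mem hsa (𝒜.PhiS.mul_mem hsa (mem_PhiS_of_mem_Z hz))
  · rw [sub_mul]
    exact sub_mem_Z hbs (hZ b hb s hs hbs y hy)
  · rw [mul_sub, ← mul_assoc]
    exact sub_mem_Z hsb (𝒜.Z_mul _ hsb y hy)
end

section
/- Let A be a C*-algebra and Φ : A → A a conditional expectation. If a ∈ A and u_1,…,u_n ∈ A satisfy ‖u_k‖ ≤ 1 for all k and Φ(u_j u_k*) = 0 whenever j ≠ k, then ∑_{k=1}^n Φ(a* u_k*) Φ(u_k a) ≤ Φ(a* a) in the canonical order of A (n-fold Kadison inequality). -/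
/-!
The sesquilinear form `⟪x, y⟫ = Φ (x* y)` is an operator-valued semi-inner product, and the
inequality is Bessel's inequality for it: the vectors `(u k)*` are pairwise orthogonal with
`‖⟪(u k)*, (u k)*⟫‖ ≤ 1`. For the Fourier sum `p = ∑ k, (u k)* Φ(u k a)` of `a`, the averaging
identity `Φ (x Φ(y)) = Φ(x) Φ(y)` gives `⟪a, p⟫ = ∑ k, Φ(a* (u k)*) Φ(u k a)` and, with
orthogonality, `⟪p, p⟫ ≤ ⟪a, p⟫`. The claim then follows from `0 ≤ ⟪a - p, a - p⟫`.
-/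

section FourierSum

variable {ι A F : Type*} [NonUnitalSemiring A]

/-- The Fourier sum of `a` along the vectors `(u k)*`, `k ∈ s`, for the form
`⟪x, y⟫ = Φ (x* y)`; the coefficients `Φ (u k * a)` stand on the right because the form is linear
for right multiplication by the values of an averaging map `Φ`. -/
def fourierSum [Star A] (Φ : A → A) (s : Finset ι) (u : ι → A) (a : A) : A :=
  ∑ k ∈ s, star (u k) * Φ (u k * a)

variable [FunLike F A A] [AddMonoidHomClass F A A] {Φ : F}

theorem map_mul_fourierSum [Star A] (hΦ : ∀ x y, Φ (x * Φ y) = Φ x * Φ y)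
    (s : Finset ι) (u : ι → A) (x a : A) :
    Φ (x * fourierSum Φ s u a) = ∑ k ∈ s, Φ (x * star (u k)) * Φ (u k * a) := by
  simp only [fourierSum, Finset.mul_sum, map_sum, ← mul_assoc, hΦ]

theorem map_mul_fourierSum_of_pairwise [Star A] (hΦ : ∀ x y, Φ (x * Φ y) = Φ x * Φ y)
    {s : Finset ι} {u : ι → A} (hu : (s : Set ι).Pairwise fun j k => Φ (u j * star (u k)) = 0)
    {k : ι} (hk : k ∈ s) (a : A) :
    Φ (u k * fourierSum Φ s u a) = Φ (u k * star (u k)) * Φ (u k * a) := by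
  rw [map_mul_fourierSum hΦ]
  refine Finset.sum_eq_single_of_mem k hk fun j hj hjk => ?_
  rw [hu hk hj hjk.symm, zero_mul]

theorem map_star_fourierSum_mul_self [StarRing A] [StarHomClass F A A]
    (hΦ : ∀ x y, Φ (x * Φ y) = Φ x * Φ y)
    {s : Finset ι} {u : ι → A} (hu : (s : Set ι).Pairwise fun j k => Φ (u j * star (u k)) = 0)
    (a : A) :
    Φ (star (fourierSum Φ s u a) * fourierSum Φ s u a) =
      ∑ k ∈ s, star (Φ (u k * a)) * Φ (u k * star (u k)) * Φ (u k * a) := by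
  rw [map_mul_fourierSum hΦ]
  refine Finset.sum_congr rfl fun k hk => ?_
  congr 1
  calc Φ (star (fourierSum Φ s u a) * star (u k))
      = star (Φ (u k * fourierSum Φ s u a)) := by rw [← star_mul, map_star]
    _ = star (Φ (u k * a)) * star (Φ (u k * star (u k))) := by
        rw [map_mul_fourierSum_of_pairwise hΦ hu hk, star_mul]
    _ = star (Φ (u k * a)) * Φ (u k * star (u k)) := by
        rw [((IsSelfAdjoint.mul_star_self (u k)).map Φ).star_eq]

end FourierSum

theorem map_star_mul_le_map_star_mul_self {A B F : Type*}
    [NonUnitalRing A] [PartialOrder A] [StarRing A] [StarOrderedRing A]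
    [NonUnitalRing B] [PartialOrder B] [StarRing B] [StarOrderedRing B]
    [FunLike F A B] [AddMonoidHomClass F A B] [OrderHomClass F A B] [StarHomClass F A B]
    (Φ : F) {a p : A} (h : Φ (star p * p) ≤ Φ (star a * p)) :
    Φ (star a * p) ≤ Φ (star a * a) := by
  have map_star_mul_self_nonneg (x : A) : 0 ≤ Φ (star x * x) :=
    map_nonneg Φ (star_mul_self_nonneg x)
  have hsymm : Φ (star p * a) = Φ (star a * p) := by
    rw [← (IsSelfAdjoint.of_nonneg ((map_star_mul_self_nonneg p).trans h)).star_eq, ← map_star,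
      star_mul, star_star]
  have hsq : Φ (star (a - p) * (a - p)) =
      Φ (star a * a) - Φ (star a * p) - (Φ (star a * p) - Φ (star p * p)) := by
    simp only [star_sub, sub_mul, mul_sub, map_sub, hsymm]
  have hle : Φ (star a * p) - Φ (star p * p) ≤ Φ (star a * a) - Φ (star a * p) :=
    sub_nonneg.mp (hsq ▸ map_star_mul_self_nonneg (a - p))
  exact sub_nonneg.mp ((sub_nonneg.mpr h).trans hle)

section CStarAlgebra

variable {A : Type*} [NonUnitalCStarAlgebra A] [PartialOrder A] [StarOrderedRing A]

theorem star_left_conjugate_le_of_norm_le_one {b : A} (hb : IsSelfAdjoint b) (hb' : ‖b‖ ≤ 1)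
    (c : A) : star c * b * c ≤ star c * c :=
  (CStarAlgebra.star_left_conjugate_le_norm_smul hb).trans
    (smul_le_of_le_one_left (star_mul_self_nonneg c) hb')

theorem nKadison_general {ι : Type*} (Φ : A →ₚ[ℂ] A) (hΦ : ∀ x y, Φ (x * Φ y) = Φ x * Φ y)
    (a : A) (s : Finset ι) (u : ι → A) (hnorm : ∀ k ∈ s, ‖Φ (u k * star (u k))‖ ≤ 1)
    (horth : (s : Set ι).Pairwise fun j k => Φ (u j * star (u k)) = 0) :
    ∑ k ∈ s, Φ (star a * star (u k)) * Φ (u k * a) ≤ Φ (star a * a) := by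
  rw [← map_mul_fourierSum hΦ]
  apply map_star_mul_le_map_star_mul_self
  rw [map_star_fourierSum_mul_self hΦ horth, map_mul_fourierSum hΦ]
  refine Finset.sum_le_sum fun k hk => ?_
  have hself : IsSelfAdjoint (Φ (u k * star (u k))) := (IsSelfAdjoint.mul_star_self _).map Φ
  calc star (Φ (u k * a)) * Φ (u k * star (u k)) * Φ (u k * a)
      ≤ star (Φ (u k * a)) * Φ (u k * a) :=
        star_left_conjugate_le_of_norm_le_one hself (hnorm k hk) _
    _ = Φ (star a * star (u k)) * Φ (u k * a) := by rw [← map_star, star_mul]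

end CStarAlgebra

/-- the n-fold Kadison inequality for a conditional expectation `Φ`
on a C*-algebra: if `‖u k‖ ≤ 1` for all `k` and `Φ (u j * (u k)*) = 0` for `j ≠ k`,
then `∑ k, Φ(a* (u k)*) Φ(u k a) ≤ Φ(a* a)`. -/
theorem nKadison {A : Type*} [CStarAlgebra A] [PartialOrder A] [StarOrderedRing A]
    (Φ : A →ₗ[ℂ] A)
    (hpos : ∀ a : A, 0 ≤ a → 0 ≤ Φ a)
    (hidem : ∀ a : A, Φ (Φ a) = Φ a)
    (hcontr : ∀ a : A, ‖Φ a‖ ≤ ‖a‖)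
    (hmull : ∀ a b : A, Φ (Φ a * b) = Φ a * Φ b)
    (hmulr : ∀ a b : A, Φ (a * Φ b) = Φ a * Φ b)
    (a : A) (n : ℕ) (u : Fin n → A)
    (hu : ∀ k, ‖u k‖ ≤ 1)
    (horth : ∀ j k, j ≠ k → Φ (u j * star (u k)) = 0) :
    ∑ k, Φ (star a * star (u k)) * Φ (u k * a) ≤ Φ (star a * a) :=
  nKadison_general (.mk₀ Φ hpos) hmulr a Finset.univ u
    (fun k _ => (hcontr _).trans
      (CStarRing.norm_self_mul_star.trans_le (mul_le_one₀ (hu k) (norm_nonneg _) (hu k))))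
    fun j _ k _ => horth j k
end

section
/- Let (A,S,Z,Φ) be a structured C*-algebra. Then Φ is normal if and only if Φ is shiftable. -/
/-!
Both directions compare two elements whose difference `d` satisfies `t * d = 0`, where `t` is
`star s` or `s`. The Kadison–Schwarz inequality for expectations gives
`star (Φ (a * t)) * Φ (a * t) ≤ ‖star a * a‖ • (star t * t)`, because `star t * t` is fixed by `Φ`,
so `Φ (a * t)` annihilates everything on its right that `t` annihilates. Now `star d` is a
combination of left multiples of `t` and of some `Φ (a * t)`, so that `star d * d = 0`.
-/

variable {A : Type*} [CStarAlgebra A] [PartialOrder A] [StarOrderedRing A]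

section Expectation

variable {B : Type*} [NonUnitalCStarAlgebra B] [PartialOrder B]

/-- The positive linear map `Φ` is an expectation: an idempotent that is linear over its own range.
Linearity over the range is only required on the right, since positive maps preserve `star`. -/
structure IsExpectation (Φ : B →ₚ[ℂ] B) : Prop where
  map_map (a : B) : Φ (Φ a) = Φ a
  map_mul_map (a b : B) : Φ (a * Φ b) = Φ a * Φ b

namespace IsExpectation

variable [StarOrderedRing B] {Φ : B →ₚ[ℂ] B}

lemma map_map_mul (hΦ : IsExpectation Φ) (a b : B) : Φ (Φ a * b) = Φ a * Φ b :=
  star_injective <| by simp only [← map_star, star_mul, hΦ.map_mul_map]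

lemma map_mul_of_map_eq (hΦ : IsExpectation Φ) {b : B} (hb : Φ b = b) (a : B) :
    Φ (b * a) = b * Φ a := by
  simpa only [hb] using hΦ.map_map_mul b a

lemma star_map_mul_map_le (hΦ : IsExpectation Φ) (a : B) :
    star (Φ a) * Φ a ≤ Φ (star a * a) := by
  have variance : Φ (star (a - Φ a) * (a - Φ a)) = Φ (star a * a) - star (Φ a) * Φ a := by
    simp only [star_sub, ← map_star, sub_mul, mul_sub, map_sub, hΦ.map_mul_map, hΦ.map_map_mul,
      hΦ.map_map, sub_self, sub_zero]
  exact sub_nonneg.mp (variance ▸ Φ.map_nonneg (star_mul_self_nonneg _))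

lemma star_map_mul_map_le_norm_smul (hΦ : IsExpectation Φ) {s : B}
    (hs : Φ (star s * s) = star s * s) (a : B) :
    star (Φ (a * s)) * Φ (a * s) ≤ ‖star a * a‖ • (star s * s) :=
  calc star (Φ (a * s)) * Φ (a * s)
      ≤ Φ (star (a * s) * (a * s)) := hΦ.star_map_mul_map_le _
    _ = Φ (star s * (star a * a) * s) := by simp only [star_mul, mul_assoc]
    _ ≤ Φ (‖star a * a‖ • (star s * s)) :=
        OrderHomClass.mono Φ (CStarAlgebra.star_left_conjugate_le_norm_smul (.star_mul_self a))
    _ = ‖star a * a‖ • (star s * s) := by rw [Φ.map_smul_of_tower, hs]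

lemma map_mul_mul_eq_zero (hΦ : IsExpectation Φ) {s e : B}
    (hs : Φ (star s * s) = star s * s) (he : s * e = 0) (a : B) : Φ (a * s) * e = 0 := by
  rw [← CStarRing.star_mul_self_eq_zero_iff]
  refine le_antisymm ?_ (star_mul_self_nonneg _)
  calc star (Φ (a * s) * e) * (Φ (a * s) * e)
      = star e * (star (Φ (a * s)) * Φ (a * s)) * e := by simp only [star_mul, mul_assoc]
    _ ≤ star e * (‖star a * a‖ • (star s * s)) * e :=
        star_left_conjugate_le_conjugate (hΦ.star_map_mul_map_le_norm_smul hs a) e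
    _ = 0 := by simp only [mul_smul_comm, smul_mul_assoc, mul_assoc, he, mul_zero, smul_zero]

lemma shiftable_of_normal (hΦ : IsExpectation Φ) {s : B}
    (hs : Φ (star s * s) = star s * s) (hs' : Φ (s * star s) = s * star s)
    (normal : ∀ a, Φ (star s * a * s) = star s * Φ a * s) (a : B) :
    Φ (s * a) * s = s * Φ (a * s) := by
  set d := Φ (s * a) * s - s * Φ (a * s) with hd
  have star_s_mul_d : star s * d = 0 := by
    rw [hd, mul_sub, sub_eq_zero]
    calc star s * (Φ (s * a) * s)
        = Φ (star s * (s * a) * s) := by rw [normal, mul_assoc]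
      _ = Φ (star s * s * (a * s)) := by simp only [mul_assoc]
      _ = star s * (s * Φ (a * s)) := by rw [hΦ.map_mul_of_map_eq hs, mul_assoc]
  have star_map_mul_d : star (Φ (s * a)) * d = 0 := by
    rw [← map_star, star_mul]
    exact hΦ.map_mul_mul_eq_zero (by rwa [star_star]) star_s_mul_d (star a)
  refine sub_eq_zero.mp ((CStarRing.star_mul_self_eq_zero_iff d).mp ?_)
  calc star d * d
      = star s * (star (Φ (s * a)) * d) - star (Φ (a * s)) * (star s * d) := by
        nth_rw 1 [hd]
        simp only [star_sub, star_mul, sub_mul, mul_assoc]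
    _ = 0 := by rw [star_map_mul_d, star_s_mul_d, mul_zero, mul_zero, sub_zero]

lemma normal_of_shiftable (hΦ : IsExpectation Φ) {s : B}
    (hs : Φ (star s * s) = star s * s) (hs' : Φ (s * star s) = s * star s)
    (shift : ∀ a, Φ (s * a) * s = s * Φ (a * s)) (a : B) :
    Φ (star s * a * s) = star s * Φ a * s := by
  set d := Φ (star s * a * s) - star s * Φ a * s with hd
  have s_mul_d : s * d = 0 := by
    rw [hd, mul_sub, sub_eq_zero]
    calc s * Φ (star s * a * s)
        = Φ (s * (star s * a)) * s := (shift _).symm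
      _ = Φ (s * star s * a) * s := by rw [mul_assoc]
      _ = s * star s * Φ a * s := by rw [hΦ.map_mul_of_map_eq hs']
      _ = s * (star s * Φ a * s) := by simp only [mul_assoc]
  have star_map_mul_d : star (Φ (star s * a * s)) * d = 0 := by
    rw [← map_star, star_mul, star_mul, star_star, ← mul_assoc]
    exact hΦ.map_mul_mul_eq_zero hs s_mul_d (star s * star a)
  refine sub_eq_zero.mp ((CStarRing.star_mul_self_eq_zero_iff d).mp ?_)
  calc star d * d
      = star (Φ (star s * a * s)) * d - star s * star (Φ a) * (s * d) := by
        nth_rw 1 [hd]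
        simp only [star_sub, star_mul, star_star, sub_mul, mul_assoc]
    _ = 0 := by rw [star_map_mul_d, s_mul_d, mul_zero, sub_zero]

end IsExpectation

theorem StructuredCStar.normal_iff_shiftable_general [StarOrderedRing B] {Φ : B →ₚ[ℂ] B}
    (hΦ : IsExpectation Φ) {s : B}
    (hs : Φ (star s * s) = star s * s) (hs' : Φ (s * star s) = s * star s) :
    (∀ a, Φ (star s * a * s) = star s * Φ a * s) ↔ (∀ a, Φ (s * a) * s = s * Φ (a * s)) :=
  ⟨hΦ.shiftable_of_normal hs hs', hΦ.normal_of_shiftable hs hs'⟩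

end Expectation

namespace StructuredCStar

lemma isExpectation (𝒜 : StructuredCStar A) : IsExpectation (.mk₀ 𝒜.Φ 𝒜.Φ_pos) :=
  ⟨𝒜.Φ_idem, 𝒜.Φ_mul_right⟩

lemma Φ_star_mul_self (𝒜 : StructuredCStar A) {s : A} (hs : s ∈ 𝒜.S) :
    𝒜.Φ (star s * s) = star s * s := by
  obtain ⟨t, -, ht⟩ := 𝒜.S_sq_sub_PhiS s hs
  rw [← ht, 𝒜.Φ_idem]

lemma Φ_mul_star_self (𝒜 : StructuredCStar A) {s : A} (hs : s ∈ 𝒜.S) :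
    𝒜.Φ (s * star s) = s * star s := by
  simpa only [star_star] using 𝒜.Φ_star_mul_self (𝒜.S_star s hs)

end StructuredCStar

/-- `Φ` is normal iff `Φ` is shiftable. -/
theorem StructuredCStar.normal_iff_shiftable (𝒜 : StructuredCStar A) :
    (∀ a : A, ∀ s ∈ 𝒜.S, 𝒜.Φ (star s * a * s) = star s * 𝒜.Φ a * s) ↔
    (∀ a : A, ∀ s ∈ 𝒜.S, 𝒜.Φ (s * a) * s = s * 𝒜.Φ (a * s)) := by
  have pointwise (s : A) (hs : s ∈ 𝒜.S) := normal_iff_shiftable_general 𝒜.isExpectation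
    (𝒜.Φ_star_mul_self hs) (𝒜.Φ_mul_star_self hs)
  exact ⟨fun normal a s hs => (pointwise s hs).mp (normal · s hs) a,
    fun shift a s hs => (pointwise s hs).mpr (shift · s hs) a⟩
end
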